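/- arXiv:2505.16155 — 4 statements merged into one kernel-verified Lean document; each statement's English description precedes it below -/
import Mathlib

section
/- Let A be a Hopf algebra over a field k, let r ∈ A be a grouplike element, and let δ : A → A be a k-linear map satisfying Δ(δ(a)) = δ(a₍₁₎) ⊗ a₍₂₎ + r a₍₁₎ ⊗ δ(a₍₂₎) for all a ∈ A. Then δ(a₍₁₎) S(a₍₂₎) + r a₍₁₎ S(δ(a₍₂₎)) = 0 for all a ∈ A. -/
open TensorProduct

/-- Let `r` be a grouplike element of a Hopf algebra `A` over a field `k` and
let `δ : A → A` be a `k`-linear map satisfying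
`Δ(δ a) = δ(a₍₁₎) ⊗ a₍₂₎ + r a₍₁₎ ⊗ δ(a₍₂₎)`.  Then
`δ(a₍₁₎) S(a₍₂₎) + r a₍₁₎ S(δ(a₍₂₎)) = 0` for all `a ∈ A`. -/
theorem delta_antipode_relation
    {k A : Type*} [Field k] [Ring A] [HopfAlgebra k A]
    (r : A)
    (hr : Coalgebra.comul (R := k) r = r ⊗ₜ[k] r)
    (hrε : Coalgebra.counit (R := k) r = 1)
    (δ : A →ₗ[k] A)
    (hδ : ∀ a : A, Coalgebra.comul (R := k) (δ a) =
      (TensorProduct.map δ (LinearMap.id : A →ₗ[k] A)) (Coalgebra.comul (R := k) a) +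
      (TensorProduct.map (LinearMap.mulLeft k r) δ) (Coalgebra.comul (R := k) a)) :
    ∀ a : A,
      (LinearMap.mul' k A) ((TensorProduct.map δ (HopfAlgebra.antipode (R := k)))
          (Coalgebra.comul (R := k) a)) +
      (LinearMap.mul' k A) ((TensorProduct.map (LinearMap.mulLeft k r)
          ((HopfAlgebra.antipode (R := k)) ∘ₗ δ)) (Coalgebra.comul (R := k) a)) = 0 := by
  intro a
  have hc : Coalgebra.counit (R := k) (δ a) = 0 := by
    have h1 := congrArg (fun x => Coalgebra.counit (R := k) (TensorProduct.lid k A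
      ((Coalgebra.counit (R := k) (A := A)).rTensor A x))) (hδ a)
    have e1 : ∀ x : A ⊗[k] A, Coalgebra.counit (R := k) (TensorProduct.lid k A
        ((Coalgebra.counit (R := k) (A := A)).rTensor A
          (TensorProduct.map δ (LinearMap.id : A →ₗ[k] A) x))) =
        Coalgebra.counit (R := k) (δ (TensorProduct.rid k A
          ((Coalgebra.counit (R := k) (A := A)).lTensor A x))) := by
      intro x
      induction x with
      | zero => simp
      | tmul x y => simp [mul_comm]
      | add x y hx hy => simp only [map_add, hx, hy]
    have e2 : ∀ x : A ⊗[k] A, Coalgebra.counit (R := k) (TensorProduct.lid k A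
        ((Coalgebra.counit (R := k) (A := A)).rTensor A
          (TensorProduct.map (LinearMap.mulLeft k r) δ x))) =
        Coalgebra.counit (R := k) (δ (TensorProduct.lid k A
          ((Coalgebra.counit (R := k) (A := A)).rTensor A x))) := by
      intro x
      induction x with
      | zero => simp
      | tmul x y => simp [hrε]
      | add x y hx hy => simp only [map_add, hx, hy]
    simp only [map_add, e1, e2, Coalgebra.rTensor_counit_comul,
      Coalgebra.lTensor_counit_comul, TensorProduct.lid_tmul, TensorProduct.rid_tmul,
      one_smul] at h1
    simpa using h1
  have h2 := HopfAlgebra.mul_antipode_lTensor_comul_apply (R := k) (δ a)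
  rw [hc, map_zero, hδ a, map_add, map_add] at h2
  rw [← h2]
  have e3 : ∀ (f g : A →ₗ[k] A) (x : A ⊗[k] A),
      (HopfAlgebra.antipode k).lTensor A (TensorProduct.map f g x) =
        TensorProduct.map f ((HopfAlgebra.antipode k) ∘ₗ g) x := by
    intro f g x
    induction x with
    | zero => simp
    | tmul x y => simp
    | add x y hx hy => simp only [map_add, hx, hy]
  rw [e3, e3, LinearMap.comp_id]
end

section
/- Let A be a Hopf algebra over a field k, let r ∈ A be a grouplike element, let χ : A → k be a character, and define τ : A → A by τ(a) = χ(a₍₁₎) a₍₂₎. Assume χ(a₍₁₎) a₍₂₎ = r a₍₁₎ S(r) χ(a₍₂₎) for all a ∈ A. Then τ(S(τ(a))) = r S(a) S(r) for all a ∈ A; equivalently S(a)·S(r) = S(r)·τ(S(τ(a))). -/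
open TensorProduct

/-- Let `r` be a grouplike element of a Hopf algebra `A` over a field `k`,
`χ : A → k` a character, and define `τ a = χ(a₍₁₎) a₍₂₎`.  Assume
`χ(a₍₁₎) a₍₂₎ = r a₍₁₎ S(r) χ(a₍₂₎)` for all `a`.  Then
`τ(S(τ a)) = r S(a) S(r)`; equivalently `S(a) S(r) = S(r) τ(S(τ a))`. -/
theorem tau_antipode_conjugation
    {k A : Type*} [Field k] [Ring A] [HopfAlgebra k A]
    (r : A)
    (hr : Coalgebra.comul (R := k) r = r ⊗ₜ[k] r)
    (hrε : Coalgebra.counit (R := k) r = 1)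
    (χ : A →ₐ[k] k)
    -- `Ad_r : a ↦ r * a * S(r)` as a linear map
    (Ad : A →ₗ[k] A)
    (hAd : ∀ a : A, Ad a = r * a * HopfAlgebra.antipode (R := k) r)
    -- `τ a = χ(a₍₁₎) a₍₂₎` as a linear map
    (τ : A →ₗ[k] A)
    (hτ : ∀ a : A, τ a = (TensorProduct.lid k A)
      ((LinearMap.rTensor A χ.toLinearMap) (Coalgebra.comul (R := k) a)))
    -- assumption: `χ(a₍₁₎) a₍₂₎ = r a₍₁₎ S(r) χ(a₍₂₎)`
    (hcomm : ∀ a : A, τ a = (TensorProduct.rid k A)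
      ((TensorProduct.map Ad χ.toLinearMap) (Coalgebra.comul (R := k) a))) :
    ∀ a : A,
      τ (HopfAlgebra.antipode (R := k) (τ a)) =
        r * HopfAlgebra.antipode (R := k) a * HopfAlgebra.antipode (R := k) r ∧
      HopfAlgebra.antipode (R := k) a * HopfAlgebra.antipode (R := k) r =
        HopfAlgebra.antipode (R := k) r * τ (HopfAlgebra.antipode (R := k) (τ a)) := by
  classical
  have hg : IsGroupLikeElem k r := ⟨hrε, hr⟩
  have h1 : HopfAlgebra.antipode k r * r = 1 := hg.antipode_mul_cancel
  have h2 : r * HopfAlgebra.antipode k r = 1 := hg.mul_antipode_cancel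
  -- `Ad` and `τ` as algebra homomorphisms
  obtain ⟨Adh, hAdh⟩ : ∃ f : A →ₐ[k] A, f.toLinearMap = Ad :=
    ⟨AlgHom.ofLinearMap Ad (by rw [hAd, mul_one, h2]) (by
      intro x y
      rw [hAd, hAd, hAd]
      calc r * (x * y) * HopfAlgebra.antipode k r
          = r * x * 1 * (y * HopfAlgebra.antipode k r) := by noncomm_ring
        _ = _ := by rw [← h1]; noncomm_ring), by ext; rfl⟩
  obtain ⟨τh, hτh⟩ : ∃ f : A →ₐ[k] A, f.toLinearMap = τ :=
    ⟨((Algebra.TensorProduct.lid k A).toAlgHom.comp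
      (Algebra.TensorProduct.map χ (AlgHom.id k A))).comp (Bialgebra.comulAlgHom k A), by
      ext a; rw [hτ]; rfl⟩
  let X : A →ₐ[k] A := (Algebra.ofId k A).comp χ
  let S : A →ₗ[k] A := HopfAlgebra.antipode k
  have e1 : WithConv.toConv τ = WithConv.toConv X.toLinearMap * WithConv.toConv LinearMap.id := by
    ext a
    rw [LinearMap.convMul_apply]
    change τ a = _
    rw [hτ]
    induction Coalgebra.comul (R := k) a using TensorProduct.induction_on with
    | zero => simp
    | tmul x y => simp [X, Algebra.ofId_apply, Algebra.smul_def]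
    | add x y hx hy => simp only [map_add, hx, hy]
  have e2 : WithConv.toConv τ = WithConv.toConv Ad * WithConv.toConv X.toLinearMap := by
    ext a
    rw [LinearMap.convMul_apply]
    change τ a = _
    rw [hcomm]
    induction Coalgebra.comul (R := k) a using TensorProduct.induction_on with
    | zero => simp
    | tmul x y => simp [X, Algebra.ofId_apply, Algebra.smul_def, Algebra.commutes]
    | add x y hx hy => simp only [map_add, hx, hy]
  have one_comp (f : A →ₐ[k] A) :
      WithConv.toConv (f.toLinearMap ∘ₗ (1 : WithConv (A →ₗ[k] A)).ofConv) = 1 := by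
    ext a; simp
  have e3 : WithConv.toConv X.toLinearMap * WithConv.toConv (X.toLinearMap ∘ₗ S) = 1 := by
    have h := LinearMap.algHom_comp_convMul_distrib X (WithConv.toConv LinearMap.id) (WithConv.toConv S)
    rw [LinearMap.id_mul_antipode] at h
    exact (WithConv.ext h).symm.trans (one_comp X)
  have e4 : WithConv.toConv (Ad ∘ₗ S) * WithConv.toConv Ad = 1 := by
    have h := LinearMap.algHom_comp_convMul_distrib Adh (WithConv.toConv S) (WithConv.toConv LinearMap.id)
    rw [LinearMap.antipode_mul_id, hAdh] at h
    exact (WithConv.ext h).symm.trans (hAdh ▸ one_comp Adh)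
  -- `Δ (τ a) = τ a₁ ⊗ a₂`
  have e5 (a : A) : Coalgebra.comul (R := k) (τ a) = τ.rTensor A (Coalgebra.comul (R := k) a) := by
    have hτ' : τ = (TensorProduct.lid k A).toLinearMap ∘ₗ χ.toLinearMap.rTensor A ∘ₗ
      Coalgebra.comul := by ext a; exact hτ a
    have h := Coalgebra.coassoc_symm_apply (R := k) a
    have h' := congrArg (fun z => (TensorProduct.lid k A).toLinearMap.rTensor A
      ((χ.toLinearMap.rTensor A).rTensor A z)) h
    conv_rhs => rw [hτ', LinearMap.rTensor_comp, LinearMap.rTensor_comp]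
    refine Eq.trans ?_ h'
    rw [hτ]
    induction Coalgebra.comul (R := k) a using TensorProduct.induction_on with
    | zero => simp
    | add x y hx hy => simp only [map_add, hx, hy]
    | tmul x y =>
      simp only [LinearMap.rTensor_tmul, LinearMap.lTensor_tmul, TensorProduct.lid_tmul, map_smul]
      induction Coalgebra.comul (R := k) y using TensorProduct.induction_on with
      | zero => simp
      | add x y hx hy => simp only [map_add, smul_add, TensorProduct.tmul_add, hx, hy]
      | tmul u v => simp [TensorProduct.smul_tmul']
  have e6 (a : A) : Coalgebra.counit (R := k) (τ a) = χ a := by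
    have h := congrArg (fun z => χ (TensorProduct.rid k A z))
      (Coalgebra.lTensor_counit_comul (R := k) a)
    simp only [TensorProduct.rid_tmul, one_smul] at h
    rw [← h, hτ]
    induction Coalgebra.comul (R := k) a using TensorProduct.induction_on with
    | zero => simp
    | add x y hx hy => simp only [map_add, hx, hy]
    | tmul x y => simp [mul_comm]
  have e7 : WithConv.toConv (S ∘ₗ τ) * WithConv.toConv LinearMap.id = WithConv.toConv X.toLinearMap := by
    ext a
    rw [LinearMap.convMul_apply]
    have h := HopfAlgebra.mul_antipode_rTensor_comul_apply (R := k) (τ a)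
    rw [e5, e6, ← LinearMap.comp_apply (LinearMap.rTensor A _), ← LinearMap.rTensor_comp] at h
    exact h
  have e8 : WithConv.toConv (τ ∘ₗ S ∘ₗ τ) * WithConv.toConv τ = WithConv.toConv X.toLinearMap := by
    have h := LinearMap.algHom_comp_convMul_distrib τh (WithConv.toConv (S ∘ₗ τ)) (WithConv.toConv LinearMap.id)
    rw [e7, hτh] at h
    refine (WithConv.ext h).symm.trans ?_
    ext a
    change τ (algebraMap k A (χ a)) = algebraMap k A (χ a)
    rw [← hτh]
    exact τh.commutes _
  have e9 : WithConv.toConv (Ad ∘ₗ S) * WithConv.toConv τ = WithConv.toConv X.toLinearMap := by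
    rw [e2, ← mul_assoc, e4, one_mul]
  have e10 : WithConv.toConv τ * (WithConv.toConv S * WithConv.toConv (X.toLinearMap ∘ₗ S)) = 1 := by
    rw [e1, mul_assoc, ← mul_assoc (WithConv.toConv LinearMap.id), LinearMap.id_mul_antipode, one_mul, e3]
  have e11 : WithConv.toConv (τ ∘ₗ S ∘ₗ τ) = WithConv.toConv (Ad ∘ₗ S) := by
    rw [← mul_one (WithConv.toConv (τ ∘ₗ S ∘ₗ τ)), ← mul_one (WithConv.toConv (Ad ∘ₗ S)), ← e10,
      ← mul_assoc, e8, ← mul_assoc (WithConv.toConv (Ad ∘ₗ S)), e9]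
  intro a
  have key : τ (S (τ a)) = Ad (S a) := congrArg (fun f => f.ofConv a) e11
  rw [hAd] at key
  refine ⟨key, ?_⟩
  change S a * S r = S r * τ (S (τ a))
  rw [key, ← mul_assoc, ← mul_assoc, h1, one_mul]
end

section
/- Let A be a Hopf algebra over a field k, let r ∈ A be a grouplike element, and let δ : A → A be a k-linear map satisfying Δ(δ(a)) = δ(a₍₁₎) ⊗ a₍₂₎ + r a₍₁₎ ⊗ δ(a₍₂₎) for all a ∈ A. Then r S(δ(a)) = − r S(a₍₁₎) S(r) δ(a₍₂₎) S(a₍₃₎) for all a ∈ A, where a₍₁₎ ⊗ a₍₂₎ ⊗ a₍₃₎ denotes (Δ ⊗ id)(Δ(a)). -/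
open TensorProduct

/-- Let `r` be a grouplike element of a Hopf algebra `A` over a field `k` and
let `δ : A → A` be a `k`-linear map with `Δ(δ a) = δ(a₍₁₎) ⊗ a₍₂₎ + r a₍₁₎ ⊗ δ(a₍₂₎)`.
Then `r S(δ a) = - r S(a₍₁₎) S(r) δ(a₍₂₎) S(a₍₃₎)`, where
`a₍₁₎ ⊗ a₍₂₎ ⊗ a₍₃₎ = (Δ ⊗ id)(Δ a)`. -/
theorem r_antipode_delta_formula
    {k A : Type*} [Field k] [Ring A] [HopfAlgebra k A]
    (r : A)
    (hr : Coalgebra.comul (R := k) r = r ⊗ₜ[k] r)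
    (hrε : Coalgebra.counit (R := k) r = 1)
    (δ : A →ₗ[k] A)
    (hδ : ∀ a : A, Coalgebra.comul (R := k) (δ a) =
      (TensorProduct.map δ (LinearMap.id : A →ₗ[k] A)) (Coalgebra.comul (R := k) a) +
      (TensorProduct.map (LinearMap.mulLeft k r) δ) (Coalgebra.comul (R := k) a))
    -- `f : a ↦ r * S(a) * S(r)` as a linear map
    (f : A →ₗ[k] A)
    (hf : ∀ a : A, f a = r * HopfAlgebra.antipode (R := k) a *
      HopfAlgebra.antipode (R := k) r) :
    ∀ a : A,
      r * HopfAlgebra.antipode (R := k) (δ a) =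
      - (LinearMap.mul' k A) ((LinearMap.rTensor A (LinearMap.mul' k A))
          ((TensorProduct.map (TensorProduct.map f δ) (HopfAlgebra.antipode (R := k)))
            ((LinearMap.rTensor A (Coalgebra.comul (R := k)))
              (Coalgebra.comul (R := k) a)))) := by
  have hS : (WithConv.toConv (LinearMap.id : A →ₗ[k] A)) *
      WithConv.toConv (HopfAlgebra.antipode k (A := A)) = 1 := by
    ext a
    exact HopfAlgebra.mul_antipode_lTensor_comul_apply (R := k) a
  -- the counit kills the image of `δ`
  have hε : ∀ a : A, Coalgebra.counit (R := k) (δ a) = 0 := by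
    intro a
    have h1 := congrArg (fun t => TensorProduct.lid k k
      (TensorProduct.map (Coalgebra.counit (R := k) (A := A)) (Coalgebra.counit (R := k) (A := A)) t)) (hδ a)
    have e1 : ∀ b : A, TensorProduct.lid k k
        (TensorProduct.map (Coalgebra.counit (R := k) (A := A)) (Coalgebra.counit (R := k) (A := A))
          (Coalgebra.comul (R := k) b)) = Coalgebra.counit (R := k) b := by
      intro b
      have h := congrArg (fun t => TensorProduct.lid k k
        ((Coalgebra.counit (R := k) (A := A)).lTensor k t)) (Coalgebra.rTensor_counit_comul (R := k) b)
      rw [← (Coalgebra.Repr.arbitrary k b).eq] at h ⊢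
      simpa [-Coalgebra.sum_tmul_counit_eq, -Coalgebra.sum_counit_tmul_eq, -Coalgebra.sum_counit_tmul_map_eq, -Coalgebra.sum_map_tmul_counit_eq] using h
    have e2 : TensorProduct.lid k k
        (TensorProduct.map (Coalgebra.counit (R := k) (A := A)) (Coalgebra.counit (R := k) (A := A))
          (TensorProduct.map δ (LinearMap.id : A →ₗ[k] A) (Coalgebra.comul (R := k) a))) =
          Coalgebra.counit (R := k) (δ a) := by
      have h := congrArg (fun t => TensorProduct.rid k k
        ((Coalgebra.counit (R := k) (A := A) ∘ₗ δ).rTensor k t)) (Coalgebra.lTensor_counit_comul (R := k) a)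
      rw [← (Coalgebra.Repr.arbitrary k a).eq] at h ⊢
      simpa [mul_comm, -Coalgebra.sum_tmul_counit_eq, -Coalgebra.sum_counit_tmul_eq, -Coalgebra.sum_counit_tmul_map_eq, -Coalgebra.sum_map_tmul_counit_eq] using h
    have e3 : TensorProduct.lid k k
        (TensorProduct.map (Coalgebra.counit (R := k) (A := A)) (Coalgebra.counit (R := k) (A := A))
          (TensorProduct.map (LinearMap.mulLeft k r) δ (Coalgebra.comul (R := k) a))) =
          Coalgebra.counit (R := k) (δ a) := by
      have h := congrArg (fun t => TensorProduct.lid k k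
        ((Coalgebra.counit (R := k) (A := A) ∘ₗ δ).lTensor k t)) (Coalgebra.rTensor_counit_comul (R := k) a)
      rw [← (Coalgebra.Repr.arbitrary k a).eq] at h ⊢
      simpa [hrε, -Coalgebra.sum_tmul_counit_eq, -Coalgebra.sum_counit_tmul_eq, -Coalgebra.sum_counit_tmul_map_eq, -Coalgebra.sum_map_tmul_counit_eq] using h
    simp only [map_add] at h1
    rw [e1, e2, e3] at h1
    simpa using h1
  have hg : WithConv.toConv (LinearMap.mulLeft k r ∘ₗ HopfAlgebra.antipode k (A := A) ∘ₗ δ) *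
      WithConv.toConv (LinearMap.id : A →ₗ[k] A) =
      - (WithConv.toConv f * WithConv.toConv δ) := by
    rw [eq_neg_iff_add_eq_zero]
    ext a
    have h := HopfAlgebra.mul_antipode_rTensor_comul_apply (R := k) (δ a)
    rw [hε, hδ, ← (Coalgebra.Repr.arbitrary k a).eq] at h
    have h2 := congrArg (fun t => r * t) h
    rw [WithConv.ofConv_add, LinearMap.add_apply]
    change LinearMap.mul' k A (TensorProduct.map _ _ (Coalgebra.comul a)) +
      LinearMap.mul' k A (TensorProduct.map _ _ (Coalgebra.comul a)) = 0
    rw [← (Coalgebra.Repr.arbitrary k a).eq]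
    simpa [hf, HopfAlgebra.antipode_mul_antidistrib, mul_add, Finset.mul_sum, mul_assoc] using h2
  have key : WithConv.toConv (LinearMap.mulLeft k r ∘ₗ HopfAlgebra.antipode k (A := A) ∘ₗ δ) =
      - ((WithConv.toConv f * WithConv.toConv δ) *
        WithConv.toConv (HopfAlgebra.antipode k (A := A))) := by
    rw [← neg_mul, ← hg, mul_assoc, hS, mul_one]
  intro a
  have h := congrArg (fun φ => φ.ofConv a) key
  refine h.trans ?_
  rw [WithConv.ofConv_neg, LinearMap.neg_apply]
  congr 1
  change LinearMap.mul' k A (TensorProduct.map _ _ (Coalgebra.comul a)) = _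
  rw [← (Coalgebra.Repr.arbitrary k a).eq]
  simp
end

section
/- Let A be a Hopf algebra over a field k, let r ∈ A be a grouplike element, let χ : A → k be a character, define τ : A → A by τ(a) = χ(a₍₁₎) a₍₂₎, and assume χ(a₍₁₎) a₍₂₎ = r a₍₁₎ S(r) χ(a₍₂₎) for all a ∈ A. Let δ : A → A be a τ-derivation satisfying Δ(δ(a)) = δ(a₍₁₎) ⊗ a₍₂₎ + r a₍₁₎ ⊗ δ(a₍₂₎) for all a ∈ A. Then χ(a₍₁₎) δ(S(a₍₂₎)) = r S(δ(a)) for all a ∈ A; equivalently δ(S(τ(a))) = r S(δ(a)). -/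
open TensorProduct

/-- Let `r` be a grouplike element of a Hopf algebra `A` over a field `k`,
`χ : A → k` a character, `τ a = χ(a₍₁₎) a₍₂₎`, and assume
`χ(a₍₁₎) a₍₂₎ = r a₍₁₎ S(r) χ(a₍₂₎)` for all `a`.  Let `δ` be a `τ`-derivation with
`Δ(δ a) = δ(a₍₁₎) ⊗ a₍₂₎ + r a₍₁₎ ⊗ δ(a₍₂₎)`.  Then
`χ(a₍₁₎) δ(S(a₍₂₎)) = r S(δ a)` for all `a`; equivalently `δ(S(τ a)) = r S(δ a)`. -/
theorem chi_delta_antipode_formula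
    {k A : Type*} [Field k] [Ring A] [HopfAlgebra k A]
    (r : A)
    (hr : Coalgebra.comul (R := k) r = r ⊗ₜ[k] r)
    (hrε : Coalgebra.counit (R := k) r = 1)
    (χ : A →ₐ[k] k)
    -- `Ad_r : a ↦ r * a * S(r)` as a linear map
    (Ad : A →ₗ[k] A)
    (hAd : ∀ a : A, Ad a = r * a * HopfAlgebra.antipode (R := k) r)
    -- `τ a = χ(a₍₁₎) a₍₂₎` as a linear map
    (τ : A →ₗ[k] A)
    (hτ : ∀ a : A, τ a = (TensorProduct.lid k A)
      ((LinearMap.rTensor A χ.toLinearMap) (Coalgebra.comul (R := k) a)))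
    -- assumption: `χ(a₍₁₎) a₍₂₎ = r a₍₁₎ S(r) χ(a₍₂₎)`
    (hcomm : ∀ a : A, τ a = (TensorProduct.rid k A)
      ((TensorProduct.map Ad χ.toLinearMap) (Coalgebra.comul (R := k) a)))
    (δ : A →ₗ[k] A)
    -- `δ` is a `τ`-derivation
    (hder : ∀ a b : A, δ (a * b) = δ a * b + τ a * δ b)
    -- `Δ(δ a) = δ(a₍₁₎) ⊗ a₍₂₎ + r a₍₁₎ ⊗ δ(a₍₂₎)`
    (hδ : ∀ a : A, Coalgebra.comul (R := k) (δ a) =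
      (TensorProduct.map δ (LinearMap.id : A →ₗ[k] A)) (Coalgebra.comul (R := k) a) +
      (TensorProduct.map (LinearMap.mulLeft k r) δ) (Coalgebra.comul (R := k) a)) :
    ∀ a : A,
      (TensorProduct.lid k A) ((TensorProduct.map χ.toLinearMap
          (δ ∘ₗ (HopfAlgebra.antipode (R := k)))) (Coalgebra.comul (R := k) a)) =
        r * HopfAlgebra.antipode (R := k) (δ a) ∧
      δ (HopfAlgebra.antipode (R := k) (τ a)) =
        r * HopfAlgebra.antipode (R := k) (δ a) := by
  have hSr : HopfAlgebra.antipode k r * r = 1 := by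
    have h := HopfAlgebra.mul_antipode_rTensor_comul_apply (R := k) r
    rw [hr, hrε] at h
    simpa using h
  have hrS : r * HopfAlgebra.antipode k r = 1 := by
    have h := HopfAlgebra.mul_antipode_lTensor_comul_apply (R := k) r
    rw [hr, hrε] at h
    simpa using h
  -- `ε ∘ δ = 0`
  have hεδ : ∀ a : A, Coalgebra.counit (R := k) (δ a) = 0 := by
    intro a
    have h := congrArg (fun x => Coalgebra.counit (R := k) (TensorProduct.lid k A
      ((Coalgebra.counit (R := k) (A := A)).rTensor A x))) (hδ a)
    have h1 : Coalgebra.counit (R := k) (δ a) =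
        ∑ i ∈ (Coalgebra.Repr.arbitrary k a).index,
          Coalgebra.counit (R := k) ((Coalgebra.Repr.arbitrary k a).left i) *
            Coalgebra.counit (R := k) (δ ((Coalgebra.Repr.arbitrary k a).right i)) := by
      conv_lhs => rw [← Coalgebra.sum_counit_smul (Coalgebra.Repr.arbitrary k a)]
      simp
    have h2 : Coalgebra.counit (R := k) (δ a) =
        ∑ i ∈ (Coalgebra.Repr.arbitrary k a).index,
          Coalgebra.counit (R := k) (δ ((Coalgebra.Repr.arbitrary k a).left i)) *
            Coalgebra.counit (R := k) ((Coalgebra.Repr.arbitrary k a).right i) := by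
      have h3 := congrArg (TensorProduct.rid k A)
        (Coalgebra.lTensor_counit_comul (R := k) a)
      rw [← (Coalgebra.Repr.arbitrary k a).eq] at h3
      simp only [map_sum, LinearMap.lTensor_tmul, TensorProduct.rid_tmul, one_smul] at h3
      conv_lhs => rw [← h3]
      simp [mul_comm]
    simp only [Coalgebra.rTensor_counit_comul] at h
    rw [← (Coalgebra.Repr.arbitrary k a).eq] at h
    simp only [map_sum, map_add, TensorProduct.map_tmul, LinearMap.rTensor_tmul,
      TensorProduct.lid_tmul, map_smul, smul_eq_mul, LinearMap.id_apply,
      LinearMap.mulLeft_apply, Bialgebra.counit_mul, hrε, one_mul, ← h1, ← h2] at h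
    simpa using h
  have hτ1 : τ 1 = 1 := by
    rw [hτ]
    simp [Algebra.TensorProduct.one_def]
  have hδ1 : δ 1 = 0 := by
    have h := hder 1 1
    simpa [hτ1] using h
  let X : WithConv (A →ₗ[k] A) := WithConv.toConv (Algebra.linearMap k A ∘ₗ χ.toLinearMap)
  let DS : WithConv (A →ₗ[k] A) := WithConv.toConv (δ ∘ₗ HopfAlgebra.antipode k)
  let SD : WithConv (A →ₗ[k] A) := WithConv.toConv (HopfAlgebra.antipode k ∘ₗ δ)
  let M : WithConv (A →ₗ[k] A) := WithConv.toConv (LinearMap.mulLeft k r)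
  let L : WithConv (A →ₗ[k] A) := WithConv.toConv
    (LinearMap.mulRight k (HopfAlgebra.antipode k r) ∘ₗ HopfAlgebra.antipode k)
  have hLM : L * M = 1 := by
    ext a
    rw [(Coalgebra.Repr.arbitrary k a).convMul_apply, LinearMap.convOne_apply,
      ← HopfAlgebra.sum_antipode_mul_eq_algebraMap_counit (Coalgebra.Repr.arbitrary k a)]
    refine Finset.sum_congr rfl fun i _ => ?_
    simp only [L, M, LinearMap.comp_apply, LinearMap.mulRight_apply, LinearMap.mulLeft_apply]
    rw [mul_assoc, ← mul_assoc _ r, hSr, one_mul]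
  have h1 : WithConv.toConv δ * WithConv.toConv (HopfAlgebra.antipode k)
      + WithConv.toConv τ * DS = 0 := by
    ext a
    have h := congrArg δ
      (HopfAlgebra.sum_mul_antipode_eq_algebraMap_counit (Coalgebra.Repr.arbitrary k a))
    rw [Algebra.algebraMap_eq_smul_one, map_smul, hδ1, smul_zero, map_sum] at h
    simp only [hder, Finset.sum_add_distrib] at h
    rw [WithConv.ofConv_add, LinearMap.add_apply, (Coalgebra.Repr.arbitrary k a).convMul_apply,
      (Coalgebra.Repr.arbitrary k a).convMul_apply]
    exact h
  have h2 : WithConv.toConv δ * WithConv.toConv (HopfAlgebra.antipode k)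
      + M * SD = 0 := by
    ext a
    have h := HopfAlgebra.mul_antipode_lTensor_comul_apply (R := k) (δ a)
    rw [hδ, hεδ, map_zero, ← (Coalgebra.Repr.arbitrary k a).eq] at h
    simp only [map_sum, map_add, TensorProduct.map_tmul, LinearMap.lTensor_tmul,
      LinearMap.mul'_apply] at h
    rw [WithConv.ofConv_add, LinearMap.add_apply, (Coalgebra.Repr.arbitrary k a).convMul_apply,
      (Coalgebra.Repr.arbitrary k a).convMul_apply]
    exact h
  have hT : WithConv.toConv τ = WithConv.toConv Ad * X := by
    ext a
    rw [(Coalgebra.Repr.arbitrary k a).convMul_apply]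
    change τ a = _
    rw [hcomm, ← (Coalgebra.Repr.arbitrary k a).eq]
    simp only [map_sum, TensorProduct.map_tmul, TensorProduct.rid_tmul]
    refine Finset.sum_congr rfl fun i _ => ?_
    simp [X, Algebra.smul_def, Algebra.commutes]
  have hA : ∀ G : WithConv (A →ₗ[k] A), WithConv.toConv Ad * G =
      M * WithConv.toConv (LinearMap.mulLeft k (HopfAlgebra.antipode k r) ∘ₗ G.ofConv) := by
    intro G
    ext a
    rw [(Coalgebra.Repr.arbitrary k a).convMul_apply, (Coalgebra.Repr.arbitrary k a).convMul_apply]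
    refine Finset.sum_congr rfl fun i _ => ?_
    simp [M, hAd, mul_assoc]
  have h3 : M * WithConv.toConv (LinearMap.mulLeft k (HopfAlgebra.antipode k r) ∘ₗ
      (X * DS).ofConv) = M * SD := by
    rw [← hA, ← mul_assoc, ← hT]
    exact add_left_cancel (h1.trans h2.symm)
  have h4 := congrArg (fun x => L * x) h3
  simp only [← mul_assoc, hLM, one_mul] at h4
  intro a
  have h5 : HopfAlgebra.antipode k r * (X * DS) a = HopfAlgebra.antipode k (δ a) :=
    congrArg (fun f : WithConv (A →ₗ[k] A) => f a) h4
  have h6 : (X * DS) a = r * HopfAlgebra.antipode k (δ a) := by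
    rw [← h5, ← mul_assoc, hrS, one_mul]
  rw [← h6, hτ, (Coalgebra.Repr.arbitrary k a).convMul_apply,
    ← (Coalgebra.Repr.arbitrary k a).eq]
  constructor
  · simp [X, DS, Algebra.smul_def]
  · simp [X, DS, ← Algebra.smul_def]
end
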